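/- For every ε ∈ (0,1) and every δ > 0 there exists n_0 such that for every n ≥ n_0, every n-vertex undirected graph G with nonnegative, polynomially bounded edge weights, and every set P ⊆ V×V of p pairs, there exists a subgraph G* ⊆ G with at most n^δ·(n+p) edges such that dist_{G*}(u,v) ≤ (1+ε)·dist_G(u,v) for every (u,v) ∈ P. -/

import Mathlib

/-!
The idea is that a sparse subgraph `S` exists for which every reachable pair has a walk of
stretch `1 + ε` with only boundedly many (a number `r` depending on `ε` and `δ` alone) edges
outside `S`. Adding to `S` those missing edges for each pair of `P` gives a preserver with at most
`|S| + 2 r |P|` edges (`exists_preserver`), and `2 r ≤ n ^ δ` for large `n`.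

The subgraph `S` comes from the Thorup-Zwick hierarchy `V = A 0 ⊇ A 1 ⊇ ... ⊇ A (k + 1) = ∅`. The
bunch of `u` at level `i` consists of the vertices of `A i` that are at least as close to `u` as
every vertex of `A (i + 1)`, ties being broken by an order on `V`. Choosing `A (i + 1)` as a greedy
hitting set for the `g²` vertices of `A i` closest to each `u` keeps bunches of size at most `g²`
and shrinks `A i` by a factor `g`, where `g` is about `n ^ (δ / 4)` (`exists_hierarchy`). Bunches
are inherited along shortest walks (`bunch_closed`), so all distances from vertices to members of
their bunches are realised exactly by one edge per pair (`exists_forest`); the union of these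
forests, made symmetric, is `S`, and it has `O(k n g²)` edges.

For the stretch, induct on the level. The claim at level `i` (`Level`) is that each pair `(x, y)`
either has a walk of stretch `1 + 8 i / (M + 1)` with few edges outside `S`, or there is a walk of
length at most `2 dist(x, y)` with few edges outside `S` from `x` to a vertex of `A (i + 1)`. For the step (`Level.succ`), cut a
shortest `x`-`y` walk into `M + 1` pieces of length at most `τ = dist(x, y) / (M + 1)`, joined by
single edges, and apply the claim to each piece, working inwards from both ends. If some piece
fails, this gives vertices `u, v` on the walk and vertices `z, z'` of `A (i + 1)` within `2 τ` of
them. Either `z'` is in the bunch of `z`, and the detour through `z, z'` costs an additional `8 τ`,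
or a vertex of `A (i + 2)` is as close to `z` as `z'` is. As `A (k + 1) = ∅`, only the first
alternative remains at level `k`.

Edges may have weight zero, so shortest walks are chosen with the fewest edges (`best`), which
makes the induction in `exists_forest` well founded. No bound on the weights is needed.
-/

open scoped ENNReal

namespace Hopsets

/-- A weighted directed graph on vertex type `V`: a finite edge set together
with a weight function. -/
structure WDigraph (V : Type) where
  edges : Finset (V × V)
  w : V × V → ℝ

variable {V : Type}

/-- All edge weights are nonnegative. -/
def WDigraph.Nonneg (G : WDigraph V) : Prop := ∀ e, 0 ≤ G.w e

/-- Edge weights are polynomially bounded (degree `q`) in the number of vertices. -/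
def WDigraph.PolyBounded [Fintype V] (G : WDigraph V) (q : ℕ) : Prop :=
  ∀ e ∈ G.edges, G.w e ≤ (Fintype.card V : ℝ) ^ q

/-- `G` encodes an undirected graph: edges come in symmetric pairs of equal weight. -/
def WDigraph.Symmetric (G : WDigraph V) : Prop :=
  ∀ e ∈ G.edges, (e.2, e.1) ∈ G.edges ∧ G.w (e.2, e.1) = G.w e

/-- `G` is unweighted: every edge has weight `1`. -/
def WDigraph.Unweighted (G : WDigraph V) : Prop := ∀ e, G.w e = 1

/-- `IsWalkFrom G u v l` : the list of edges `l` forms a walk from `u` to `v` in `G`. -/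
def IsWalkFrom (G : WDigraph V) : V → V → List (V × V) → Prop
  | u, v, [] => u = v
  | u, v, e :: l => e ∈ G.edges ∧ e.1 = u ∧ IsWalkFrom G e.2 v l

/-- The total weight of a walk, as an extended nonnegative real. -/
noncomputable def walkWeight (G : WDigraph V) (l : List (V × V)) : ℝ≥0∞ :=
  ENNReal.ofReal ((l.map G.w).sum)

/-- `β`-hop-bounded distance: the infimum weight of a `u`-`v` walk with at most `β` edges. -/
noncomputable def WDigraph.hopDist (G : WDigraph V) (β : ℕ) (u v : V) : ℝ≥0∞ :=
  ⨅ l ∈ {l : List (V × V) | IsWalkFrom G u v l ∧ l.length ≤ β}, walkWeight G l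

/-- Distance: infimum weight of a `u`-`v` walk (`∞` if there is none). -/
noncomputable def WDigraph.dist (G : WDigraph V) (u v : V) : ℝ≥0∞ :=
  ⨅ l ∈ {l : List (V × V) | IsWalkFrom G u v l}, walkWeight G l

/-- `v` is reachable from `u` in `G`. -/
def WDigraph.Reachable (G : WDigraph V) (u v : V) : Prop :=
  ∃ l, IsWalkFrom G u v l

/-- The graph `G ∪ H` obtained by adding the edge set `H`, each added edge `(x,y)`
weighted by `dist_G(x,y)`. -/
noncomputable def WDigraph.augment [DecidableEq V] (G : WDigraph V) (H : Finset (V × V)) :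
    WDigraph V where
  edges := G.edges ∪ H
  w := fun e => if e ∈ H then (G.dist e.1 e.2).toReal else G.w e

/-- `H` is a `(β,ε)`-hopset for `G`:
`dist_G(u,v) ≤ dist^{(β)}_{G∪H}(u,v) ≤ (1+ε)·dist_G(u,v)` for all `u, v`. -/
def IsHopset [DecidableEq V] (G : WDigraph V) (β : ℕ) (ε : ℝ) (H : Finset (V × V)) : Prop :=
  ∀ u v, G.dist u v ≤ (G.augment H).hopDist β u v ∧
    (G.augment H).hopDist β u v ≤ ENNReal.ofReal (1 + ε) * G.dist u v

/-- The subgraph of `G` with edge set `E'` (same weights). -/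
def WDigraph.sub (G : WDigraph V) (E' : Finset (V × V)) : WDigraph V :=
  ⟨E', G.w⟩

/-- `E'` (a subgraph of `G`) is an `r`-missing `t`-spanner: for every reachable pair
`(u,v)` there is a `u`-`v` walk in `G` of weight at most `t·dist_G(u,v)` with at most
`r` edges outside `E'`. -/
def IsMissingSpanner [DecidableEq V] (G : WDigraph V) (E' : Finset (V × V))
    (r : ℕ) (t : ℝ) : Prop :=
  ∀ u v, G.Reachable u v → ∃ l, IsWalkFrom G u v l ∧
    walkWeight G l ≤ ENNReal.ofReal t * G.dist u v ∧
    (l.filter (fun e => decide (e ∉ E'))).length ≤ r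

end Hopsets

namespace Hopsets

/-! ### Walks -/

section Walks

variable {V : Type} {G : WDigraph V}

/-- The total weight of an edge list, as a real number. -/
def wt (G : WDigraph V) (l : List (V × V)) : ℝ := (l.map G.w).sum

@[simp] lemma wt_nil : wt G [] = 0 := by simp [wt]

@[simp] lemma wt_cons (e : V × V) (l : List (V × V)) : wt G (e :: l) = G.w e + wt G l := by
  simp [wt]

@[simp] lemma wt_append (l l' : List (V × V)) : wt G (l ++ l') = wt G l + wt G l' := by
  simp [wt]

lemma wt_nonneg (hn : G.Nonneg) (l : List (V × V)) : 0 ≤ wt G l := by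
  induction l with
  | nil => simp
  | cons e l ih => rw [wt_cons]; have := hn e; linarith

lemma IsWalkFrom.append {u v x : V} {l l' : List (V × V)} (h : IsWalkFrom G u v l)
    (h' : IsWalkFrom G v x l') : IsWalkFrom G u x (l ++ l') := by
  induction l generalizing u with
  | nil => cases h; exact h'
  | cons e l ih => exact ⟨h.1, h.2.1, ih h.2.2⟩

lemma IsWalkFrom.mem_edges {u v : V} {l : List (V × V)} (h : IsWalkFrom G u v l) :
    ∀ e ∈ l, e ∈ G.edges := by
  induction l generalizing u with
  | nil => simp
  | cons e l ih =>
    intro f hf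
    rcases List.mem_cons.1 hf with rfl | hf
    · exact h.1
    · exact ih h.2.2 f hf

lemma IsWalkFrom.to_sub {u v : V} {l : List (V × V)} {E : Finset (V × V)}
    (h : IsWalkFrom G u v l) (hE : ∀ e ∈ l, e ∈ E) : IsWalkFrom (G.sub E) u v l := by
  induction l generalizing u with
  | nil => exact h
  | cons e l ih =>
    exact ⟨hE e (by simp), h.2.1, ih h.2.2 fun f hf => hE f (by simp [hf])⟩

lemma isWalkFrom_edge {u v : V} (h : (u, v) ∈ G.edges) : IsWalkFrom G u v [(u, v)] :=
  ⟨h, rfl, rfl⟩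

lemma IsWalkFrom.reverse (hs : G.Symmetric) {u v : V} {l : List (V × V)}
    (h : IsWalkFrom G u v l) :
    IsWalkFrom G v u (l.reverse.map Prod.swap) ∧ wt G (l.reverse.map Prod.swap) = wt G l := by
  induction l generalizing u with
  | nil => cases h; exact ⟨rfl, by simp⟩
  | cons e l ih =>
    obtain ⟨h1, rfl, h3⟩ := h
    obtain ⟨a, b⟩ := ih h3
    rw [List.reverse_cons, List.map_append]
    refine ⟨a.append (isWalkFrom_edge (hs e h1).1), ?_⟩
    have := (hs e h1).2
    simp only [wt_append, b, wt_cons, List.map_cons, List.map_nil, wt_nil, Prod.swap]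
    linarith

lemma IsWalkFrom.drop {u v x : V} {a b : List (V × V)} {f : V × V} (hf : f.1 = x)
    (h : IsWalkFrom G u v (a ++ f :: b)) : IsWalkFrom G x v (f :: b) := by
  induction a generalizing u with
  | nil => exact ⟨h.1, hf, h.2.2⟩
  | cons e a ih => exact ih h.2.2

/-- Cutting out closed sub-walks: every walk can be replaced by one that visits no vertex
twice and is neither heavier nor longer. -/
lemma IsWalkFrom.exists_simple (hn : G.Nonneg) {u v : V} {l : List (V × V)}
    (h : IsWalkFrom G u v l) : ∃ l', IsWalkFrom G u v l' ∧ wt G l' ≤ wt G l ∧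
      l'.length ≤ l.length ∧ (l'.map Prod.fst).Nodup := by
  induction l generalizing u with
  | nil => exact ⟨[], h, le_rfl, le_rfl, by simp⟩
  | cons e l ih =>
    obtain ⟨h1, rfl, h3⟩ := h
    obtain ⟨l', a, b, c, d⟩ := ih h3
    by_cases hm : e.1 ∈ l'.map Prod.fst
    · obtain ⟨f, hf, hfe⟩ := List.mem_map.1 hm
      obtain ⟨s, t, rfl⟩ := List.append_of_mem hf
      refine ⟨f :: t, a.drop hfe, ?_, ?_, ?_⟩
      · have h4 := wt_nonneg hn s
        have h5 := hn e
        simp only [wt_append, wt_cons] at b ⊢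
        linarith
      · simp at c ⊢; omega
      · rw [List.map_append] at d
        exact (List.nodup_append.1 d).2.1
    · exact ⟨e :: l', ⟨h1, rfl, a⟩, by simpa using b, by simpa using c,
        by rw [List.map_cons]; exact List.nodup_cons.2 ⟨hm, d⟩⟩

lemma reachable_edge {u v : V} (h : (u, v) ∈ G.edges) : G.Reachable u v :=
  ⟨_, isWalkFrom_edge h⟩

lemma reachable_symm (hs : G.Symmetric) {u v : V} (h : G.Reachable u v) : G.Reachable v u := by
  obtain ⟨l, hl⟩ := h
  exact ⟨_, (hl.reverse hs).1⟩

lemma reachable_trans {u v x : V} (h : G.Reachable u v) (h' : G.Reachable v x) :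
    G.Reachable u x := by
  obtain ⟨l, hl⟩ := h
  obtain ⟨l', hl'⟩ := h'
  exact ⟨_, hl.append hl'⟩

/-- The infimum defining the distance is attained. Among the lightest walks one of minimum
length is taken; this matters because edges of weight zero are allowed. -/
lemma exists_best [Fintype V] (hn : G.Nonneg) {u v : V} (h : G.Reachable u v) :
    ∃ l, IsWalkFrom G u v l ∧ ∀ l', IsWalkFrom G u v l' →
      wt G l ≤ wt G l' ∧ (wt G l' = wt G l → l.length ≤ l'.length) := by
  classical
  let T : Set (List (V × V)) := {l | IsWalkFrom G u v l ∧ l.length ≤ Fintype.card V}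
  have hT : T.Finite := (List.finite_length_le (V × V) (Fintype.card V)).subset fun l hl => hl.2
  have key : ∀ l, IsWalkFrom G u v l → ∃ l' ∈ T, wt G l' ≤ wt G l ∧ l'.length ≤ l.length := by
    intro l hl
    obtain ⟨l', a, b, c, d⟩ := hl.exists_simple hn
    exact ⟨l', ⟨a, by simpa using d.length_le_card⟩, b, c⟩
  have hne : T.Nonempty := by
    obtain ⟨l, hl⟩ := h
    obtain ⟨l', h1, -⟩ := key l hl
    exact ⟨l', h1⟩
  obtain ⟨m, hm, hmin⟩ := hT.exists_minimalFor
    (fun l => (toLex (wt G l, l.length) : ℝ ×ₗ ℕ)) T hne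
  refine ⟨m, hm.1, fun l hl => ?_⟩
  obtain ⟨l', h1, h2, h3⟩ := key l hl
  have h4 : (toLex (wt G m, m.length) : ℝ ×ₗ ℕ) ≤ toLex (wt G l', l'.length) := by
    rcases le_total (toLex (wt G m, m.length) : ℝ ×ₗ ℕ) (toLex (wt G l', l'.length)) with h | h
    · exact h
    · exact hmin h1 h
  rw [Prod.Lex.toLex_le_toLex] at h4
  simp only at h4
  rcases h4 with h4 | ⟨h4, h5⟩
  · exact ⟨by linarith, fun h => by linarith⟩
  · exact ⟨by linarith, fun h => by omega⟩

end Walks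

/-! ### Distances and shortest-path forests -/

section Distance

variable {V : Type} [Fintype V] {G : WDigraph V}

open Classical in
/-- A lightest walk from `u` to `v` with the fewest edges (empty if `v` is unreachable). -/
noncomputable def best (G : WDigraph V) (u v : V) : List (V × V) :=
  if h : G.Nonneg ∧ G.Reachable u v then (exists_best h.1 h.2).choose else []

/-- The distance as a real number; meaningful only for reachable pairs, and `0` otherwise. -/
noncomputable def rd (G : WDigraph V) (u v : V) : ℝ := wt G (best G u v)

lemma best_spec (hn : G.Nonneg) {u v : V} (h : G.Reachable u v) :
    IsWalkFrom G u v (best G u v) ∧ ∀ l', IsWalkFrom G u v l' →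
      wt G (best G u v) ≤ wt G l' ∧
        (wt G l' = wt G (best G u v) → (best G u v).length ≤ l'.length) := by
  have := (exists_best hn h).choose_spec
  rw [best, dif_pos ⟨hn, h⟩]
  exact this

lemma rd_le (hn : G.Nonneg) {u v : V} {l : List (V × V)} (h : IsWalkFrom G u v l) :
    rd G u v ≤ wt G l := ((best_spec hn ⟨l, h⟩).2 l h).1

lemma rd_nonneg (hn : G.Nonneg) (u v : V) : 0 ≤ rd G u v := wt_nonneg hn _

lemma rd_self (hn : G.Nonneg) (u : V) : rd G u u = 0 :=
  le_antisymm (by simpa using rd_le hn (show IsWalkFrom G u u [] from rfl)) (rd_nonneg hn u u)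

lemma rd_triangle (hn : G.Nonneg) {u v x : V} (h : G.Reachable u v) (h' : G.Reachable v x) :
    rd G u x ≤ rd G u v + rd G v x := by
  have := rd_le hn ((best_spec hn h).1.append (best_spec hn h').1)
  rwa [wt_append] at this

lemma rd_comm (hn : G.Nonneg) (hs : G.Symmetric) {u v : V} (h : G.Reachable u v) :
    rd G u v = rd G v u := by
  have h' := reachable_symm hs h
  have a := (best_spec hn h).1.reverse hs
  have b := (best_spec hn h').1.reverse hs
  have a1 := rd_le hn a.1
  have b1 := rd_le hn b.1
  rw [a.2] at a1
  rw [b.2] at b1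
  exact le_antisymm b1 a1

lemma ofReal_rd_le_dist (hn : G.Nonneg) (u v : V) : ENNReal.ofReal (rd G u v) ≤ G.dist u v :=
  le_iInf₂ fun _ hl => ENNReal.ofReal_le_ofReal (rd_le hn hl)

lemma rd_edge_le (hn : G.Nonneg) {u v : V} (h : (u, v) ∈ G.edges) : rd G u v ≤ G.w (u, v) := by
  simpa using rd_le hn (isWalkFrom_edge h)

/-- A set of pairs that contains, with `(u, v)`, every pair `(x, v)` such that the edge `(u, x)`
begins a shortest `u`-`v` walk. -/
def PathClosed (G : WDigraph V) (R : Finset (V × V)) : Prop :=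
  ∀ u v x, (u, v) ∈ R → (u, x) ∈ G.edges → G.Reachable x v →
    rd G u v = G.w (u, x) + rd G x v → (x, v) ∈ R

/-- Shortest-path forests: a path-closed set of reachable pairs has its distances preserved
exactly by a subgraph with at most one edge per pair, namely the first edges of the
walks `best`. -/
lemma exists_forest [DecidableEq V] (hn : G.Nonneg) {R : Finset (V × V)} (hR : PathClosed G R)
    (hreach : ∀ p ∈ R, G.Reachable p.1 p.2) :
    ∃ S ⊆ G.edges, S.card ≤ R.card ∧ ∀ p ∈ R, ∃ l, IsWalkFrom G p.1 p.2 l ∧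
      wt G l = rd G p.1 p.2 ∧ ∀ e ∈ l, e ∈ S := by
  classical
  refine ⟨G.edges.filter fun e => ∃ p ∈ R, (best G p.1 p.2).head? = some e,
    Finset.filter_subset _ _, ?_, ?_⟩
  · rw [← Finset.card_image_of_injective _ (Option.some_injective (V × V))]
    refine (Finset.card_le_card (t := R.image fun p => (best G p.1 p.2).head?) ?_).trans
      Finset.card_image_le
    intro o ho
    simp only [Finset.mem_image, Finset.mem_filter] at ho ⊢
    obtain ⟨e, ⟨-, p, hp, he⟩, rfl⟩ := ho
    exact ⟨p, hp, he⟩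
  · suffices H : ∀ k : ℕ, ∀ u v, (u, v) ∈ R → (best G u v).length ≤ k →
        ∃ l, IsWalkFrom G u v l ∧ wt G l = rd G u v ∧ ∀ e ∈ l,
          e ∈ G.edges.filter fun e => ∃ p ∈ R, (best G p.1 p.2).head? = some e from
      fun p hp => H _ p.1 p.2 hp le_rfl
    intro k
    induction k with
    | zero =>
      intro u v huv hk
      have h1 := (best_spec hn (hreach _ huv)).1
      exact ⟨_, h1, rfl, by simp [List.length_eq_zero_iff.1 (Nat.le_zero.1 hk)]⟩
    | succ k ih =>
      intro u v huv hk
      obtain ⟨h1, h2⟩ := best_spec hn (hreach _ huv)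
      rcases hb : best G u v with _ | ⟨e, l⟩
      · refine ⟨_, h1, rfl, by simp [hb]⟩
      · simp only at h1 h2
        rw [hb] at h1 h2 hk
        obtain ⟨he, rfl, h3⟩ := h1
        have hr : G.Reachable e.2 v := ⟨l, h3⟩
        obtain ⟨h4, h5⟩ := best_spec hn hr
        have h6 := (h2 (e :: best G e.2 v) ⟨he, rfl, h4⟩).1
        have h7 := h5 l h3
        rw [wt_cons, wt_cons] at h6
        have h8 : wt G l = rd G e.2 v := le_antisymm (by rw [rd]; linarith) h7.1
        have h9 : rd G e.1 v = G.w e + rd G e.2 v := by rw [rd, hb, wt_cons, h8]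
        have h10 := hR e.1 v e.2 huv he hr h9
        obtain ⟨l', a, b, c⟩ := ih e.2 v h10 (by
          have := h7.2 h8
          simp at hk
          omega)
        refine ⟨e :: l', ⟨he, rfl, a⟩, by rw [wt_cons, b, h9], ?_⟩
        intro f hf
        rcases List.mem_cons.1 hf with rfl | hf
        · exact Finset.mem_filter.2 ⟨he, (f.1, v), huv, by simp [hb]⟩
        · exact c f hf

/-- A shortest walk longer than `τ` has an edge `(a, b)` at which the distance from the start
first exceeds `τ`. -/
lemma exists_crossing (hn : G.Nonneg) {x y : V} {τ : ℝ} (hτ : 0 ≤ τ) (hxy : G.Reachable x y)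
    (hlt : τ < rd G x y) : ∃ a b, (a, b) ∈ G.edges ∧ G.Reachable x a ∧ rd G x a ≤ τ ∧
      τ < rd G x b ∧ rd G x a + G.w (a, b) = rd G x b ∧ G.Reachable b y ∧
      rd G x b + rd G b y = rd G x y := by
  suffices H : ∀ l c, IsWalkFrom G c y l → G.Reachable x c → rd G x c ≤ τ →
      rd G x c + wt G l = rd G x y → ∃ a b, (a, b) ∈ G.edges ∧ G.Reachable x a ∧
      rd G x a ≤ τ ∧ τ < rd G x b ∧ rd G x a + G.w (a, b) = rd G x b ∧ G.Reachable b y ∧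
      rd G x b + rd G b y = rd G x y by
    refine H _ x (best_spec hn hxy).1 ⟨[], rfl⟩ (by rw [rd_self hn]; exact hτ) ?_
    rw [rd_self hn, zero_add, rd]
  intro l
  induction l with
  | nil =>
    intro c hc _ hcτ _
    cases hc
    linarith
  | cons e l ih =>
    intro c hc hxc hcτ hsum
    obtain ⟨h1, rfl, h3⟩ := hc
    rw [wt_cons] at hsum
    have he : G.Reachable e.1 e.2 := reachable_edge h1
    have h4 : rd G e.1 e.2 ≤ G.w e := rd_edge_le hn h1
    have hxb := reachable_trans hxc he
    have hby : G.Reachable e.2 y := ⟨l, h3⟩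
    have h5 := rd_triangle hn hxc he
    have h6 := rd_triangle hn hxb hby
    have h7 := rd_le hn h3
    have h8 : rd G x e.1 + G.w e = rd G x e.2 := by linarith
    rcases le_or_gt (rd G x e.2) τ with h | h
    · exact ih e.2 h3 hxb h (by linarith)
    · exact ⟨e.1, e.2, h1, hxc, hcτ, h, h8, hby, by linarith⟩

end Distance

/-! ### Stretch of walks that mostly use a subgraph -/

section Stretch

variable {V : Type} [DecidableEq V] {G : WDigraph V} {S : Finset (V × V)}

/-- There is a `u`-`v` walk of weight at most `D` with at most `r` edges outside `S`. -/
def Hop (G : WDigraph V) (S : Finset (V × V)) (r : ℕ) (u v : V) (D : ℝ) : Prop :=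
  ∃ l, IsWalkFrom G u v l ∧ wt G l ≤ D ∧ l.countP (fun e => decide (e ∉ S)) ≤ r

lemma Hop.trans {r r' : ℕ} {u v x : V} {D D' : ℝ} (h : Hop G S r u v D)
    (h' : Hop G S r' v x D') : Hop G S (r + r') u x (D + D') := by
  obtain ⟨l, a, b, c⟩ := h
  obtain ⟨l', a', b', c'⟩ := h'
  exact ⟨l ++ l', a.append a', by rw [wt_append]; linarith, by rw [List.countP_append]; omega⟩

lemma Hop.mono {r r' : ℕ} {u v : V} {D D' : ℝ} (h : Hop G S r u v D) (hr : r ≤ r')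
    (hD : D ≤ D') : Hop G S r' u v D' := by
  obtain ⟨l, a, b, c⟩ := h
  exact ⟨l, a, b.trans hD, c.trans hr⟩

lemma Hop.symm (hs : G.Symmetric) (hS : ∀ e ∈ S, e.swap ∈ S) {r : ℕ} {u v : V} {D : ℝ}
    (h : Hop G S r u v D) : Hop G S r v u D := by
  obtain ⟨l, a, b, c⟩ := h
  obtain ⟨a', b'⟩ := a.reverse hs
  refine ⟨_, a', by rw [b']; exact b, ?_⟩
  rw [List.countP_map, List.countP_reverse]
  refine le_trans (le_of_eq ?_) c
  congr 1
  funext e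
  have : e.swap ∈ S ↔ e ∈ S := ⟨fun h => by simpa using hS _ h, hS e⟩
  simp [this]

lemma Hop.reachable {r : ℕ} {u v : V} {D : ℝ} (h : Hop G S r u v D) : G.Reachable u v :=
  ⟨_, h.choose_spec.1⟩

lemma Hop.of_edge {u v : V} (h : (u, v) ∈ G.edges) : Hop G S 1 u v (G.w (u, v)) :=
  ⟨_, isWalkFrom_edge h, by simp, List.countP_le_length⟩

variable [Fintype V]

lemma Hop.rd_le (hn : G.Nonneg) {r : ℕ} {u v : V} {D : ℝ} (h : Hop G S r u v D) :
    rd G u v ≤ D := by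
  obtain ⟨l, a, b, -⟩ := h
  exact (Hopsets.rd_le hn a).trans b

/-- Every reachable pair `(x, y)` is either joined by a walk of stretch `1 + c` with at most
`r` edges outside `S`, or some vertex of `A` is reached from `x` by a walk of weight at most
`2·dist(x, y)` with at most `r` edges outside `S`. -/
def Level (G : WDigraph V) (S : Finset (V × V)) (A : Finset V) (r : ℕ) (c : ℝ) : Prop :=
  ∀ x y, G.Reachable x y →
    Hop G S r x y ((1 + c) * rd G x y) ∨ ∃ z ∈ A, Hop G S r x z (2 * rd G x y)

/-- Every reachable pair `(x, y)` with `y ∈ A` either has its distance preserved exactly in `S`,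
or `x` has in `S` an exact shortest walk to some vertex of `A'` that is no farther than `y`. -/
def Bridge (G : WDigraph V) (S : Finset (V × V)) (A A' : Finset V) : Prop :=
  ∀ x, ∀ y ∈ A, G.Reachable x y →
    Hop G S 0 x y (rd G x y) ∨ ∃ q ∈ A', Hop G S 0 x q (rd G x y)

lemma Bridge.level_zero (hn : G.Nonneg) {A' : Finset V} (h : Bridge G S Finset.univ A') :
    Level G S A' 0 0 := by
  intro x y hxy
  rcases h x y (Finset.mem_univ y) hxy with h | ⟨q, hq, h⟩
  · exact Or.inl (by simpa using h)
  · exact Or.inr ⟨q, hq, h.mono le_rfl (by linarith [rd_nonneg hn x y])⟩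

/-- Sweeping from `x` towards `y` in steps of length `τ`: either all steps have good stretch,
or the sweep stops at a vertex `u` on a shortest walk from which a vertex `z` of `A` is
close. -/
lemma Level.sweep (hn : G.Nonneg) {A : Finset V} {r : ℕ} {c : ℝ} (hc : 0 ≤ c)
    (hL : Level G S A r c) {τ : ℝ} (hτ : 0 ≤ τ) (N : ℕ) : ∀ x y, G.Reachable x y →
      rd G x y ≤ (N + 1) * τ →
      Hop G S ((N + 1) * (r + 1)) x y ((1 + c) * rd G x y) ∨
      ∃ u z, G.Reachable u y ∧ rd G x u + rd G u y = rd G x y ∧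
        Hop G S ((N + 1) * (r + 1)) x u ((1 + c) * rd G x u) ∧ z ∈ A ∧
        Hop G S r u z (2 * τ) := by
  -- At distance at most `τ` one application of the hypothesis suffices.
  have direct : ∀ N : ℕ, ∀ x y, G.Reachable x y → rd G x y ≤ τ →
      Hop G S ((N + 1) * (r + 1)) x y ((1 + c) * rd G x y) ∨
      ∃ u z, G.Reachable u y ∧ rd G x u + rd G u y = rd G x y ∧
        Hop G S ((N + 1) * (r + 1)) x u ((1 + c) * rd G x u) ∧ z ∈ A ∧
        Hop G S r u z (2 * τ) := by
    intro N x y hxy hd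
    rcases hL x y hxy with h | ⟨z, hz, h⟩
    · exact Or.inl (h.mono (by nlinarith) le_rfl)
    · refine Or.inr ⟨x, z, hxy, by rw [rd_self hn, zero_add], ?_, hz, h.mono le_rfl (by linarith)⟩
      exact ⟨[], rfl, by simp [rd_self hn], by simp⟩
  induction N with
  | zero => intro x y hxy hd; exact direct 0 x y hxy (by simpa using hd)
  | succ N ih =>
    intro x y hxy hd
    push_cast at hd
    rcases le_or_gt (rd G x y) τ with h | h
    · exact direct (N + 1) x y hxy h
    obtain ⟨a, b, hab, hxa, haτ, hbτ, hxab, hby, hxby⟩ := exists_crossing hn hτ hxy h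
    have hw := hn (a, b)
    rcases hL x a hxa with h1 | ⟨z, hz, h1⟩
    · have h2 : Hop G S (r + 1) x b ((1 + c) * rd G x b) :=
        (h1.trans (Hop.of_edge hab)).mono le_rfl (by rw [← hxab]; nlinarith)
      have hxb := h2.reachable
      rcases ih b y hby (by linarith) with h3 | ⟨u, z, huy, hu, h3, hz, h4⟩
      · exact Or.inl ((h2.trans h3).mono (by nlinarith) (by rw [← hxby]; linarith))
      · have h5 := rd_triangle hn hxb h3.reachable
        have h6 := rd_triangle hn (reachable_trans hxb h3.reachable) huy
        have h7 : rd G x u = rd G x b + rd G b u := by linarith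
        refine Or.inr ⟨u, z, huy, by linarith, ?_, hz, h4⟩
        exact (h2.trans h3).mono (by nlinarith) (by rw [h7]; linarith)
    · refine Or.inr ⟨x, z, hxy, by rw [rd_self hn, zero_add], ?_, hz, h1.mono le_rfl (by linarith)⟩
      exact ⟨[], rfl, by simp [rd_self hn], by simp⟩

/-- The inductive step of the stretch analysis: sweep inwards from both ends until reaching
vertices `z`, `z'` of `A`, and bridge these two vertices. -/
lemma Level.succ (hn : G.Nonneg) (hs : G.Symmetric) (hS : ∀ e ∈ S, e.swap ∈ S)
    {A A' : Finset V} {r : ℕ} {c : ℝ} (hc : 0 ≤ c) (hL : Level G S A r c)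
    (hB : Bridge G S A A') (M : ℕ) (hM : c + 6 / (M + 1) ≤ 1) :
    Level G S A' (2 * ((M + 1) * (r + 1)) + 2 * r) (c + 8 / (M + 1)) := by
  intro x y hxy
  have hM0 : (0 : ℝ) < M + 1 := by positivity
  obtain ⟨τ, hτ⟩ : ∃ τ, τ = rd G x y / (M + 1) := ⟨_, rfl⟩
  have hD := rd_nonneg hn x y
  have hτ0 : 0 ≤ τ := by rw [hτ]; positivity
  have hDτ : rd G x y = (M + 1) * τ := by rw [hτ]; field_simp
  have h8 : 8 / ((M : ℝ) + 1) * rd G x y = 8 * τ := by rw [hDτ]; field_simp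
  have h6 : 6 / ((M : ℝ) + 1) * rd G x y = 6 * τ := by rw [hDτ]; field_simp
  have hstretch : (1 + (c + 8 / ((M : ℝ) + 1))) * rd G x y = (1 + c) * rd G x y + 8 * τ := by
    rw [← h8]; ring
  rcases hL.sweep hn hc hτ0 M x y hxy hDτ.le with h | ⟨u, z, huy, hu, h1, hz, h2⟩
  · exact Or.inl (h.mono (by omega) (by linarith))
  have hyu := reachable_symm hs huy
  have hc1 := rd_comm hn hs huy
  have hxu0 := rd_nonneg hn x u
  -- The second sweep ends at `u`, so that `u` and `v` occur in this order on the walk.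
  rcases hL.sweep hn hc hτ0 M y u hyu (by linarith) with h | ⟨v, z', hvu, hv, h3, hz', h4⟩
  · exact Or.inl ((h1.trans (h.symm hs hS)).mono (by omega) (by
      rw [hstretch, ← hu, ← hc1]; linarith))
  have huv := reachable_symm hs hvu
  have hc2 := rd_comm hn hs hvu
  have huv0 := rd_nonneg hn u v
  have hyv0 := rd_nonneg hn y v
  have hzu := h2.symm hs hS
  have hsplit : rd G x y = rd G x u + rd G u v + rd G y v := by linarith
  have hzz : rd G z z' ≤ 4 * τ + rd G u v := by
    have a1 := rd_triangle hn hzu.reachable huv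
    have a2 := rd_triangle hn (reachable_trans hzu.reachable huv) h4.reachable
    have a3 := hzu.rd_le hn
    have a4 := h4.rd_le hn
    linarith
  have hzz' := reachable_trans (reachable_trans hzu.reachable huv) h4.reachable
  have p1 := mul_nonneg hc huv0
  have p2 := mul_nonneg hc hyv0
  rcases hB z z' hz' hzz' with h | ⟨q, hq, h⟩
  · left
    refine ((h1.trans h2).trans (h.trans ((h4.symm hs hS).trans (h3.symm hs hS)))).mono
      (by omega) ?_
    rw [hstretch, hsplit]
    linarith
  · right
    refine ⟨q, hq, ((h1.trans h2).trans h).mono (by omega) ?_⟩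
    have a1 : (c + 6 / ((M : ℝ) + 1)) * rd G x y ≤ 1 * rd G x y :=
      mul_le_mul_of_nonneg_right hM hD
    have a2 : c * rd G x y = c * rd G x u + c * rd G u v + c * rd G y v := by rw [hsplit]; ring
    linarith

/-- The number of edges outside the subgraph that the stretch analysis allows after `i` steps. -/
def hops (M : ℕ) : ℕ → ℕ
  | 0 => 0
  | i + 1 => 2 * ((M + 1) * (hops M i + 1)) + 2 * hops M i

lemma level_of_bridges (hn : G.Nonneg) (hs : G.Symmetric) (hS : ∀ e ∈ S, e.swap ∈ S)
    {A : ℕ → Finset V} (hA : A 0 = Finset.univ) {K : ℕ}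
    (hB : ∀ i ≤ K, Bridge G S (A i) (A (i + 1))) {M : ℕ} (hM : 8 * (K : ℝ) / (M + 1) ≤ 1) :
    ∀ i ≤ K, Level G S (A (i + 1)) (hops M i) (8 * i / (M + 1)) := by
  intro i
  induction i with
  | zero =>
    intro _
    have := hB 0 (Nat.zero_le _)
    rw [hA] at this
    simpa [hops] using this.level_zero hn
  | succ i ih =>
    intro hi
    have hM0 : (0 : ℝ) < M + 1 := by positivity
    have h := (ih (by omega)).succ hn hs hS (by positivity) (hB (i + 1) hi) M ?_
    · have hc : 8 * ((i + 1 : ℕ) : ℝ) / (M + 1) = 8 * i / (M + 1) + 8 / (M + 1) := by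
        push_cast
        ring
      rw [hc]
      exact h
    · refine le_trans ?_ hM
      have : (i : ℝ) + 1 ≤ K := by exact_mod_cast hi
      rw [← add_div]
      gcongr
      linarith

end Stretch

/-! ### Hitting sets -/

section Hitting

variable {V : Type} [DecidableEq V]

/-- Greedy hitting sets: choosing an element of `s` that meets the most sets not yet hit
decreases the number of these by a factor `1 - m / |s|`. -/
lemma exists_greedy {ι : Type} (F : Finset ι) (f : ι → Finset V) {s : Finset V} {m : ℕ}
    (hs : ∀ i ∈ F, f i ⊆ s) (hm : ∀ i ∈ F, m ≤ (f i).card) (hpos : 0 < s.card)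
    (hms : m ≤ s.card) (t : ℕ) : ∃ T ⊆ s, T.card ≤ t ∧
      ((F.filter fun i => Disjoint (f i) T).card : ℝ) ≤ F.card * (1 - m / s.card) ^ t := by
  have hpos' : (0 : ℝ) < s.card := by exact_mod_cast hpos
  have hq : (0 : ℝ) ≤ 1 - m / s.card := by
    rw [sub_nonneg, div_le_one hpos']
    exact_mod_cast hms
  induction t with
  | zero =>
    exact ⟨∅, Finset.empty_subset _, by simp, by simp⟩
  | succ t ih =>
    obtain ⟨T, hT, hTc, hU⟩ := ih
    set U := F.filter fun i => Disjoint (f i) T with hUdef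
    -- Double counting of pairs `v ∈ f i` with `f i` not yet hit.
    have hcount : ∑ v ∈ s, ((U.card : ℝ) * m / s.card) ≤
        ∑ v ∈ s, ((U.filter fun i => v ∈ f i).card : ℝ) := by
      have h1 : ∑ v ∈ s, (U.filter fun i => v ∈ f i).card = ∑ i ∈ U, (f i).card := by
        have h2 := Finset.sum_card_bipartiteAbove_eq_sum_card_bipartiteBelow
          (s := s) (t := U) (fun v i => v ∈ f i)
        simp only [Finset.bipartiteAbove, Finset.bipartiteBelow] at h2
        rw [h2]
        refine Finset.sum_congr rfl fun i hi => ?_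
        rw [Finset.filter_mem_eq_inter,
          Finset.inter_eq_right.2 (hs i (Finset.mem_filter.1 hi).1)]
      have h3 : U.card * m ≤ ∑ i ∈ U, (f i).card := by
        rw [← smul_eq_mul]
        exact Finset.card_nsmul_le_sum _ _ _ fun i hi => hm i (Finset.mem_filter.1 hi).1
      rw [Finset.sum_const, nsmul_eq_mul, mul_div_cancel₀ _ hpos'.ne', ← Nat.cast_sum, h1]
      exact_mod_cast h3
    obtain ⟨v, hv, hle⟩ := Finset.exists_le_of_sum_le (Finset.card_pos.1 hpos) hcount
    refine ⟨insert v T, Finset.insert_subset hv hT, (Finset.card_insert_le _ _).trans (by omega),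
      ?_⟩
    have hsub : (F.filter fun i => Disjoint (f i) (insert v T)) ⊆ U.filter fun i => v ∉ f i := by
      intro i hi
      simp only [Finset.mem_filter, Finset.disjoint_insert_right, hUdef] at hi ⊢
      tauto
    have h4 : ((F.filter fun i => Disjoint (f i) (insert v T)).card : ℝ) ≤
        (U.filter fun i => v ∉ f i).card := by exact_mod_cast Finset.card_le_card hsub
    have h5 : ((U.filter fun i => v ∈ f i).card : ℝ) + (U.filter fun i => v ∉ f i).card = U.card :=
      by exact_mod_cast Finset.card_filter_add_card_filter_not (s := U) fun i => v ∈ f i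
    have h6 : (U.card : ℝ) * (1 - m / s.card) ≤ F.card * (1 - m / s.card) ^ t * (1 - m / s.card) :=
      mul_le_mul_of_nonneg_right hU hq
    rw [pow_succ, ← mul_assoc]
    refine le_trans ?_ h6
    rw [mul_sub, mul_one, ← mul_div_assoc]
    linarith

/-- Fewer than `exp (g / 2)` subsets of `s` of size `g²` can be hit by `|s| / g` elements. -/
lemma exists_hitting {ι : Type} (F : Finset ι) (f : ι → Finset V) {s : Finset V} {g : ℕ}
    (hg : 1 ≤ g) (hs : ∀ i ∈ F, f i ⊆ s) (hm : ∀ i ∈ F, (f i).card = g ^ 2)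
    (hF : (F.card : ℝ) < Real.exp (g / 2)) :
    ∃ T ⊆ s, g * T.card ≤ s.card ∧ ∀ i ∈ F, ∃ v ∈ f i, v ∈ T := by
  rcases F.eq_empty_or_nonempty with rfl | ⟨i₀, hi₀⟩
  · exact ⟨∅, Finset.empty_subset _, by simp, by simp⟩
  have hsg : g ^ 2 ≤ s.card := by
    rw [← hm i₀ hi₀]; exact Finset.card_le_card (hs i₀ hi₀)
  have hpos : 0 < s.card := lt_of_lt_of_le (by positivity) hsg
  obtain ⟨T, hT, hTc, hU⟩ := exists_greedy F f (m := g ^ 2) hs (fun i hi => (hm i hi).ge) hpos hsg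
    (s.card / g)
  refine ⟨T, hT, (Nat.mul_le_mul_left g hTc).trans (Nat.mul_div_le _ _), ?_⟩
  set t := s.card / g with ht
  -- Rounding `|s| / g` down at most halves it, because `|s| ≥ g²`.
  have h2t : s.card ≤ 2 * (g * t) := by
    have h1 := Nat.div_add_mod s.card g
    have h2 := Nat.mod_lt s.card (show 0 < g by omega)
    have h3 : 1 ≤ t := (Nat.one_le_div_iff (by omega)).2 (by nlinarith)
    have h4 : g ≤ g * t := Nat.le_mul_of_pos_right g h3
    rw [← ht] at h1
    omega
  have hpos' : (0 : ℝ) < s.card := by exact_mod_cast hpos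
  have h2t' : (s.card : ℝ) ≤ 2 * (g * t) := by exact_mod_cast h2t
  have hle : (1 - ((g ^ 2 : ℕ) : ℝ) / s.card) ^ t ≤ Real.exp (-(g / 2)) := by
    have hq : (0 : ℝ) ≤ 1 - ((g ^ 2 : ℕ) : ℝ) / s.card := by
      rw [sub_nonneg, div_le_one hpos']
      exact_mod_cast hsg
    refine (pow_le_pow_left₀ hq (Real.one_sub_le_exp_neg _) t).trans ?_
    rw [← Real.exp_nat_mul, Real.exp_le_exp]
    have : (g : ℝ) / 2 ≤ t * (((g ^ 2 : ℕ) : ℝ) / s.card) := by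
      rw [← mul_div_assoc, div_le_div_iff₀ two_pos hpos']
      push_cast
      have hg0 : (0 : ℝ) ≤ g := Nat.cast_nonneg g
      nlinarith
    linarith
  have hlt : ((F.filter fun i => Disjoint (f i) T).card : ℝ) < 1 := by
    calc _ ≤ _ := hU
      _ ≤ F.card * Real.exp (-(g / 2)) := by gcongr
      _ < Real.exp (g / 2) * Real.exp (-(g / 2)) := by gcongr
      _ = 1 := by rw [← Real.exp_add]; simp
  have h0 : (F.filter fun i => Disjoint (f i) T).card = 0 := by
    have : (F.filter fun i => Disjoint (f i) T).card < 1 := by exact_mod_cast hlt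
    omega
  intro i hi
  have h1 := Finset.filter_eq_empty_iff.1 (Finset.card_eq_zero.1 h0) hi
  exact Finset.not_disjoint_iff.1 h1

/-- The `m` elements of `s` with the smallest keys. -/
lemma exists_initial {K : Type} [LinearOrder K] (s : Finset V) (key : V → K) (m : ℕ)
    (hm : m ≤ s.card) :
    ∃ T ⊆ s, T.card = m ∧ ∀ a ∈ T, ∀ b ∈ s, b ∉ T → key a ≤ key b := by
  induction m with
  | zero => exact ⟨∅, Finset.empty_subset _, rfl, by simp⟩
  | succ m ih =>
    obtain ⟨T, hT, hc, hk⟩ := ih (by omega)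
    have hne : (s \ T).Nonempty := by
      rw [← Finset.card_pos, Finset.card_sdiff_of_subset hT]
      omega
    obtain ⟨b, hb, hmin⟩ := Finset.exists_min_image (s \ T) key hne
    rw [Finset.mem_sdiff] at hb
    refine ⟨insert b T, Finset.insert_subset hb.1 hT, by rw [Finset.card_insert_of_notMem hb.2, hc],
      ?_⟩
    intro a ha c hcs hcT
    rw [Finset.mem_insert, not_or] at hcT
    rcases Finset.mem_insert.1 ha with rfl | ha
    · exact hmin c (Finset.mem_sdiff.2 ⟨hcs, hcT.2⟩)
    · exact hk a ha c hcs hcT.2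

end Hitting

/-! ### Bunches and the hierarchy -/

section Bunches

variable {V : Type} [Fintype V] {G : WDigraph V}

/-- Vertices are compared by their distance from `u`, ties being broken by the order on `V`. -/
noncomputable def key (G : WDigraph V) (u v : V) : ℝ ×ₗ V := toLex (rd G u v, v)

lemma key_injective (u : V) : Function.Injective (key G u) := by
  intro v v' h
  have := congrArg (fun p => (ofLex p).2) h
  simpa [key] using this

variable [LinearOrder V] {S : Finset (V × V)}

lemma key_le {u v q : V} :
    key G u v ≤ key G u q ↔ rd G u v < rd G u q ∨ rd G u v = rd G u q ∧ v ≤ q := by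
  simp [key, Prod.Lex.toLex_le_toLex]

open Classical in
/-- The bunch of `u`: the vertices of `A` reachable from `u` that do not come after any vertex
of `A'` in the order by distance from `u`. With ties broken it contains the vertex of `A'`
nearest to `u`. -/
noncomputable def bunch (G : WDigraph V) (A A' : Finset V) (u : V) : Finset V :=
  A.filter fun v => G.Reachable u v ∧ ∀ q ∈ A', G.Reachable u q → key G u v ≤ key G u q

lemma mem_bunch {A A' : Finset V} {u v : V} : v ∈ bunch G A A' u ↔
    v ∈ A ∧ G.Reachable u v ∧ ∀ q ∈ A', G.Reachable u q → key G u v ≤ key G u q := by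
  classical
  simp [bunch]

/-- One step of the hierarchy: if `A'` hits, for each `u`, the `g²` vertices of `A` closest to `u`,
then the bunch of `u` lies among these. -/
lemma exists_sparser {g : ℕ} (hg : 1 ≤ g)
    (hF : (Fintype.card V : ℝ) < Real.exp (g / 2)) (A : Finset V) :
    ∃ A' ⊆ A, g * A'.card ≤ A.card ∧ ∀ u, (bunch G A A' u).card ≤ g ^ 2 := by
  classical
  have hN : ∀ u, ∃ T ⊆ A.filter (G.Reachable u), T.card = min (g ^ 2) (A.filter (G.Reachable u)).card
      ∧ ∀ a ∈ T, ∀ b ∈ A.filter (G.Reachable u), b ∉ T → key G u a ≤ key G u b :=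
    fun u => exists_initial _ (key G u) _ (min_le_right _ _)
  choose N hN1 hN2 hN3 using hN
  obtain ⟨T, hT, hTc, hhit⟩ := exists_hitting
    (Finset.univ.filter fun u => g ^ 2 ≤ (A.filter (G.Reachable u)).card) N (s := A) hg
    (fun u _ => (hN1 u).trans (Finset.filter_subset _ _))
    (fun u hu => by rw [hN2, min_eq_left (Finset.mem_filter.1 hu).2])
    (lt_of_le_of_lt (by exact_mod_cast Finset.card_le_univ _) hF)
  refine ⟨T, hT, hTc, fun u => ?_⟩
  have hsub : bunch G A T u ⊆ A.filter (G.Reachable u) := by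
    intro v hv
    rw [mem_bunch] at hv
    exact Finset.mem_filter.2 ⟨hv.1, hv.2.1⟩
  rcases le_or_gt (g ^ 2) (A.filter (G.Reachable u)).card with h | h
  · obtain ⟨q, hq, hqT⟩ := hhit u (Finset.mem_filter.2 ⟨Finset.mem_univ u, h⟩)
    rw [← min_eq_left h, ← hN2 u]
    refine Finset.card_le_card fun v hv => ?_
    by_contra hvN
    have h1 := hN3 u q hq v (hsub hv) hvN
    have h2 := (mem_bunch.1 hv).2.2 q hqT (Finset.mem_filter.1 (hN1 u hq)).2
    exact hvN (key_injective u (le_antisymm h2 h1) ▸ hq)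
  · exact (Finset.card_le_card hsub).trans h.le

lemma exists_hierarchy {g : ℕ} (hg : 1 ≤ g) (hF : (Fintype.card V : ℝ) < Real.exp (g / 2)) :
    ∃ A : ℕ → Finset V, A 0 = Finset.univ ∧ ∀ i, A (i + 1) ⊆ A i ∧
      g * (A (i + 1)).card ≤ (A i).card ∧ ∀ u, (bunch G (A i) (A (i + 1)) u).card ≤ g ^ 2 := by
  choose f hf using exists_sparser (G := G) hg hF
  exact ⟨fun i => Nat.rec Finset.univ (fun _ => f) i, rfl, fun i => hf _⟩

/-- Bunches are inherited along shortest walks. -/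
lemma bunch_closed (hn : G.Nonneg) {A A' : Finset V} {u v x : V} (hv : v ∈ bunch G A A' u)
    (hux : (u, x) ∈ G.edges) (hxv : G.Reachable x v)
    (hd : rd G u v = G.w (u, x) + rd G x v) : v ∈ bunch G A A' x := by
  rw [mem_bunch] at hv ⊢
  refine ⟨hv.1, hxv, fun q hq hxq => ?_⟩
  have h1 := hv.2.2 q hq (reachable_trans (reachable_edge hux) hxq)
  have h2 := rd_triangle hn (reachable_edge hux) hxq
  have h3 := rd_edge_le hn hux
  rw [key_le] at h1 ⊢
  rcases h1 with h1 | ⟨h1, h4⟩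
  · left; linarith
  · rcases lt_or_ge (rd G x v) (rd G x q) with h | h
    · exact Or.inl h
    · exact Or.inr ⟨by linarith, h4⟩

/-- If `y` is not in the bunch of `x`, the vertex of `A'` nearest to `x` is; it is no farther. -/
lemma bridge_of_bunch {A A' : Finset V} (hA : A' ⊆ A)
    (hS : ∀ u, ∀ v ∈ bunch G A A' u, Hop G S 0 u v (rd G u v)) : Bridge G S A A' := by
  classical
  intro x y hy hxy
  by_cases hb : y ∈ bunch G A A' x
  · exact Or.inl (hS x y hb)
  right
  rw [mem_bunch] at hb
  push Not at hb
  obtain ⟨q, hq, hxq, hlt⟩ := hb hy hxy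
  obtain ⟨p, hp, hmin⟩ := Finset.exists_min_image (A'.filter (G.Reachable x)) (key G x)
    ⟨q, Finset.mem_filter.2 ⟨hq, hxq⟩⟩
  rw [Finset.mem_filter] at hp
  refine ⟨p, hp.1, (hS x p ?_).mono le_rfl ?_⟩
  · rw [mem_bunch]
    exact ⟨hA hp.1, hp.2, fun r hr hxr => hmin r (Finset.mem_filter.2 ⟨hr, hxr⟩)⟩
  · have := (hmin q (Finset.mem_filter.2 ⟨hq, hxq⟩)).trans hlt.le
    rw [key_le] at this
    rcases this with h | h
    · exact h.le
    · exact h.1.le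

/-- A sparse subgraph `S` such that every reachable pair has a walk of stretch `1 + ε` with
boundedly many edges outside `S`. -/
lemma exists_missing_spanner (hn : G.Nonneg) (hs : G.Symmetric) {g k M : ℕ} {ε : ℝ} (hg : 1 ≤ g)
    (hF : (Fintype.card V : ℝ) < Real.exp (g / 2)) (hk : Fintype.card V < g ^ (k + 1))
    (hM : 8 * (k : ℝ) / (M + 1) ≤ ε) (hε : ε ≤ 1) :
    ∃ S ⊆ G.edges, (∀ e ∈ S, e.swap ∈ S) ∧
      S.card ≤ 2 * ((k + 1) * (Fintype.card V * g ^ 2)) ∧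
      ∀ x y, G.Reachable x y → Hop G S (hops M k) x y ((1 + ε) * rd G x y) := by
  obtain ⟨A, hA0, hA⟩ := exists_hierarchy (G := G) hg hF
  have hAk : A (k + 1) = ∅ := by
    have h : ∀ i, g ^ i * (A i).card ≤ Fintype.card V := by
      intro i
      induction i with
      | zero => simpa using Finset.card_le_univ (A 0)
      | succ i ih =>
        calc g ^ (i + 1) * (A (i + 1)).card = g ^ i * (g * (A (i + 1)).card) := by ring
          _ ≤ g ^ i * (A i).card := Nat.mul_le_mul_left _ (hA i).2.1
          _ ≤ _ := ih
    have h1 := h (k + 1)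
    rw [← Finset.card_eq_zero]
    by_contra h0
    have : g ^ (k + 1) ≤ g ^ (k + 1) * (A (k + 1)).card :=
      Nat.le_mul_of_pos_right _ (Nat.pos_of_ne_zero h0)
    omega
  let R : Finset (V × V) := (Finset.range (k + 1)).biUnion fun i =>
    Finset.univ.biUnion fun u => (bunch G (A i) (A (i + 1)) u).image fun v => (u, v)
  have hmem : ∀ u v, (u, v) ∈ R ↔ ∃ i < k + 1, v ∈ bunch G (A i) (A (i + 1)) u := by
    intro u v
    simp [R]
  have hRcard : R.card ≤ (k + 1) * (Fintype.card V * g ^ 2) := by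
    refine (Finset.card_biUnion_le_card_mul _ _ (Fintype.card V * g ^ 2) fun i _ => ?_).trans
      (by rw [Finset.card_range])
    exact Finset.card_biUnion_le_card_mul _ _ (g ^ 2) fun u _ =>
      Finset.card_image_le.trans ((hA i).2.2 u)
  obtain ⟨S, hSE, hSc, hSw⟩ := exists_forest hn (R := R)
    (fun u v x huv hux hxv hd => by
      obtain ⟨i, hi, hv⟩ := (hmem u v).1 huv
      exact (hmem x v).2 ⟨i, hi, bunch_closed hn hv hux hxv hd⟩)
    (fun p hp => by
      obtain ⟨i, hi, hv⟩ := (hmem p.1 p.2).1 hp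
      exact (mem_bunch.1 hv).2.1)
  have hsym : ∀ e ∈ S ∪ S.image Prod.swap, e.swap ∈ S ∪ S.image Prod.swap := by
    intro e he
    simp only [Finset.mem_union, Finset.mem_image] at he ⊢
    rcases he with he | ⟨f, hf, rfl⟩
    · exact Or.inr ⟨e, he, rfl⟩
    · exact Or.inl (by simpa using hf)
  refine ⟨S ∪ S.image Prod.swap, ?_, hsym, ?_, ?_⟩
  · refine Finset.union_subset hSE fun e he => ?_
    obtain ⟨f, hf, rfl⟩ := Finset.mem_image.1 he
    exact (hs f (hSE hf)).1
  · have h1 := Finset.card_union_le S (S.image Prod.swap)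
    have h2 : (S.image Prod.swap).card ≤ S.card := Finset.card_image_le
    omega
  · have hB : ∀ i ≤ k, Bridge G (S ∪ S.image Prod.swap) (A i) (A (i + 1)) := by
      intro i hi
      refine bridge_of_bunch (hA i).1 fun u v hv => ?_
      obtain ⟨l, h1, h2, h3⟩ := hSw (u, v) ((hmem u v).2 ⟨i, by omega, hv⟩)
      refine ⟨l, h1, h2.le, le_of_eq (List.countP_eq_zero.2 fun e he => ?_)⟩
      simp [h3 e he]
    have hL := level_of_bridges hn hs hsym hA0 hB (hM.trans hε) k le_rfl
    intro x y hxy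
    rcases hL x y hxy with h | ⟨z, hz, -⟩
    · exact h.mono le_rfl (mul_le_mul_of_nonneg_right (by linarith) (rd_nonneg hn x y))
    · rw [hAk] at hz
      simp at hz

/-- Adding to `S` the edges missed by the near-shortest walks of the pairs in `P` gives a
preserver for `P`. -/
lemma exists_preserver (hn : G.Nonneg) (hs : G.Symmetric) {r : ℕ} {ε : ℝ} (hε : 0 ≤ ε)
    (hSE : S ⊆ G.edges) (hsym : ∀ e ∈ S, e.swap ∈ S)
    (hS : ∀ x y, G.Reachable x y → Hop G S r x y ((1 + ε) * rd G x y)) (P : Finset (V × V)) :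
    ∃ E ⊆ G.edges, (∀ e ∈ E, e.swap ∈ E) ∧ E.card ≤ S.card + P.card * (2 * r) ∧
      ∀ p ∈ P, (G.sub E).dist p.1 p.2 ≤ ENNReal.ofReal (1 + ε) * G.dist p.1 p.2 := by
  have h : ∀ p : V × V, ∃ M ⊆ G.edges, (∀ e ∈ M, e.swap ∈ M) ∧ M.card ≤ 2 * r ∧
      ∀ E, S ⊆ E → M ⊆ E →
        (G.sub E).dist p.1 p.2 ≤ ENNReal.ofReal (1 + ε) * G.dist p.1 p.2 := by
    intro p
    by_cases hp : G.Reachable p.1 p.2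
    · obtain ⟨l, h1, h2, h3⟩ := hS _ _ hp
      obtain ⟨M, hM⟩ : ∃ M, M = (l.filter fun e => decide (e ∉ S)).toFinset := ⟨_, rfl⟩
      have hMc : M.card ≤ r := by
        rw [hM]
        refine (List.toFinset_card_le _).trans ?_
        rwa [← List.countP_eq_length_filter]
      have hME : M ⊆ G.edges := by
        intro e he
        rw [hM, List.mem_toFinset] at he
        exact h1.mem_edges e (List.mem_filter.1 he).1
      refine ⟨M ∪ M.image Prod.swap, ?_, ?_, ?_, ?_⟩
      · refine Finset.union_subset hME fun e he => ?_
        obtain ⟨f, hf, rfl⟩ := Finset.mem_image.1 he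
        exact (hs f (hME hf)).1
      · intro e he
        simp only [Finset.mem_union, Finset.mem_image] at he ⊢
        rcases he with he | ⟨f, hf, rfl⟩
        · exact Or.inr ⟨e, he, rfl⟩
        · exact Or.inl (by simpa using hf)
      · have h4 := Finset.card_union_le M (M.image Prod.swap)
        have h5 : (M.image Prod.swap).card ≤ M.card := Finset.card_image_le
        omega
      · intro E hSE' hME'
        have hl : ∀ e ∈ l, e ∈ E := by
          intro e he
          by_cases heS : e ∈ S
          · exact hSE' heS
          · refine hME' (Finset.mem_union_left _ ?_)
            rw [hM, List.mem_toFinset]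
            exact List.mem_filter.2 ⟨he, by simpa using heS⟩
        calc (G.sub E).dist p.1 p.2 ≤ walkWeight (G.sub E) l := iInf₂_le l (h1.to_sub hl)
          _ = ENNReal.ofReal (wt G l) := rfl
          _ ≤ ENNReal.ofReal ((1 + ε) * rd G p.1 p.2) := ENNReal.ofReal_le_ofReal h2
          _ = ENNReal.ofReal (1 + ε) * ENNReal.ofReal (rd G p.1 p.2) :=
            ENNReal.ofReal_mul (by linarith)
          _ ≤ _ := by gcongr; exact ofReal_rd_le_dist hn _ _
    · refine ⟨∅, Finset.empty_subset _, by simp, by simp, fun E _ _ => ?_⟩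
      have htop : G.dist p.1 p.2 = ⊤ := by
        rw [WDigraph.dist, iInf₂_eq_top]
        exact fun l hl => absurd ⟨l, hl⟩ hp
      rw [htop, ENNReal.mul_top]
      · exact le_top
      · rw [Ne, ENNReal.ofReal_eq_zero]
        linarith
  choose M hME hMsym hMc hM using h
  refine ⟨S ∪ P.biUnion M, Finset.union_subset hSE (Finset.biUnion_subset.2 fun p _ => hME p),
    ?_, ?_, fun p hp => hM p _ Finset.subset_union_left ?_⟩
  · intro e he
    simp only [Finset.mem_union, Finset.mem_biUnion] at he ⊢
    rcases he with he | ⟨p, hp, he⟩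
    · exact Or.inl (hsym e he)
    · exact Or.inr ⟨p, hp, hMsym p e he⟩
  · exact (Finset.card_union_le _ _).trans
      (Nat.add_le_add_left (Finset.card_biUnion_le_card_mul _ _ _ fun p _ => hMc p) _)
  · exact (Finset.subset_biUnion_of_mem M hp).trans Finset.subset_union_right

end Bunches

/-! ### Choice of parameters -/

/-- For large `n`, the bunch-size parameter `g = ⌈n ^ (δ / 4)⌉` meets all requirements. -/
lemma eventually_params {δ : ℝ} (hδ : 0 < δ) {k : ℕ} (hk : 4 / δ ≤ k) (r : ℕ) :
    ∀ᶠ n : ℕ in Filter.atTop, ∃ g : ℕ, 1 ≤ g ∧ (n : ℝ) < Real.exp (g / 2) ∧ n < g ^ (k + 1) ∧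
      (2 * ((k + 1) * (n * g ^ 2)) : ℝ) ≤ (n : ℝ) ^ δ * n ∧ (2 * r : ℝ) ≤ (n : ℝ) ^ δ := by
  have hlog : ∀ᶠ x : ℝ in Filter.atTop, Real.log x ≤ 1 / 4 * x ^ (δ / 4) := by
    filter_upwards [(isLittleO_log_rpow_atTop (show 0 < δ / 4 by positivity)).def
      (show (0 : ℝ) < 1 / 4 by norm_num), Filter.eventually_gt_atTop 0] with x hx hx0
    rw [Real.norm_of_nonneg (Real.rpow_nonneg hx0.le _)] at hx
    exact (le_abs_self _).trans hx
  have h1 := (tendsto_rpow_atTop (show 0 < δ / 2 by positivity)).eventually_ge_atTop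
    (8 * ((k : ℝ) + 1))
  have h2 := (tendsto_rpow_atTop hδ).eventually_ge_atTop (2 * (r : ℝ))
  filter_upwards [tendsto_natCast_atTop_atTop.eventually hlog,
    tendsto_natCast_atTop_atTop.eventually h1, tendsto_natCast_atTop_atTop.eventually h2,
    Filter.eventually_ge_atTop 2] with n hn1 hn2 hn3 hn4
  have hn1' : (1 : ℝ) < n := by exact_mod_cast hn4
  have hn0 : (0 : ℝ) < n := by linarith
  have hx1 : (1 : ℝ) < (n : ℝ) ^ (δ / 4) := Real.one_lt_rpow hn1' (by positivity)
  have hgl : (n : ℝ) ^ (δ / 4) ≤ (⌈(n : ℝ) ^ (δ / 4)⌉₊ : ℝ) := Nat.le_ceil _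
  have hgu : (⌈(n : ℝ) ^ (δ / 4)⌉₊ : ℝ) < (n : ℝ) ^ (δ / 4) + 1 := Nat.ceil_lt_add_one (by linarith)
  refine ⟨⌈(n : ℝ) ^ (δ / 4)⌉₊, Nat.one_le_ceil_iff.2 (by linarith), ?_, ?_, ?_, hn3⟩
  · rw [← Real.log_lt_iff_lt_exp hn0]
    linarith
  · have h3 : (n : ℝ) < ((n : ℝ) ^ (δ / 4)) ^ (k + 1) := by
      rw [← Real.rpow_natCast, ← Real.rpow_mul hn0.le]
      conv_lhs => rw [← Real.rpow_one (n : ℝ)]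
      apply Real.rpow_lt_rpow_of_exponent_lt hn1'
      rw [div_le_iff₀ hδ] at hk
      push_cast
      nlinarith
    have h4 : ((n : ℝ) ^ (δ / 4)) ^ (k + 1) ≤ (⌈(n : ℝ) ^ (δ / 4)⌉₊ : ℝ) ^ (k + 1) := by gcongr
    exact_mod_cast h3.trans_le h4
  · have h5 : (⌈(n : ℝ) ^ (δ / 4)⌉₊ : ℝ) ^ 2 ≤ 4 * (n : ℝ) ^ (δ / 2) := by
      have h6 : (n : ℝ) ^ (δ / 2) = (n : ℝ) ^ (δ / 4) * (n : ℝ) ^ (δ / 4) := by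
        rw [← Real.rpow_add hn0]; ring_nf
      rw [h6]
      nlinarith
    have h7 : (n : ℝ) ^ δ = (n : ℝ) ^ (δ / 2) * (n : ℝ) ^ (δ / 2) := by
      rw [← Real.rpow_add hn0]; ring_nf
    calc (2 * ((k + 1) * (n * (⌈(n : ℝ) ^ (δ / 4)⌉₊ : ℝ) ^ 2)) : ℝ)
        ≤ 2 * ((k + 1) * (n * (4 * (n : ℝ) ^ (δ / 2)))) := by gcongr
      _ = 8 * (k + 1) * (n : ℝ) ^ (δ / 2) * n := by ring
      _ ≤ (n : ℝ) ^ (δ / 2) * (n : ℝ) ^ (δ / 2) * n := by gcongr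
      _ = _ := by rw [h7]

end Hopsets

open Hopsets in
/-- For every `ε ∈ (0,1)` and `δ > 0`, for all large enough `n`, every
`n`-vertex undirected graph with nonnegative polynomially bounded weights and every set
`P` of `p` pairs admits a `(1+ε)`-distance preserver (a subgraph) with at most
`n^δ·(n+p)` edges. -/
theorem stmt_5 (ε δ : ℝ) (hε : ε ∈ Set.Ioo (0 : ℝ) 1) (hδ : 0 < δ) (q : ℕ) :
    ∃ n0 : ℕ, ∀ n ≥ n0, ∀ G : WDigraph (Fin n),
      G.Symmetric → G.Nonneg → G.PolyBounded q →
      ∀ P : Finset (Fin n × Fin n),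
        ∃ Estar ⊆ G.edges, (∀ e ∈ Estar, (e.2, e.1) ∈ Estar) ∧
          (Estar.card : ℝ) ≤ (n : ℝ) ^ δ * ((n : ℝ) + (P.card : ℝ)) ∧
          ∀ uv ∈ P,
            (G.sub Estar).dist uv.1 uv.2 ≤ ENNReal.ofReal (1 + ε) * G.dist uv.1 uv.2 := by
  obtain ⟨k, hk⟩ := exists_nat_ge (4 / δ)
  obtain ⟨M, hM⟩ := exists_nat_ge (8 * (k : ℝ) / ε)
  have hM' : 8 * (k : ℝ) / (M + 1) ≤ ε := by
    rw [div_le_iff₀ hε.1] at hM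
    rw [div_le_iff₀ (by positivity)]
    linarith [hε.1]
  obtain ⟨n0, hn0⟩ := Filter.eventually_atTop.1 (eventually_params hδ hk (hops M k))
  refine ⟨n0, fun n hn G hs hG _ P => ?_⟩
  obtain ⟨g, hg, hg1, hg2, hg3, hr⟩ := hn0 n hn
  obtain ⟨S, hSE, hsym, hSc, hS⟩ := exists_missing_spanner hG hs hg
    (by simpa using hg1) (by simpa using hg2) hM' hε.2.le
  obtain ⟨E, hE, hEsym, hEc, hEd⟩ := exists_preserver hG hs hε.1.le hSE hsym hS P
  refine ⟨E, hE, hEsym, ?_, hEd⟩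
  rw [Fintype.card_fin] at hSc
  have h1 : (E.card : ℝ) ≤ S.card + P.card * (2 * hops M k) := by exact_mod_cast hEc
  have h2 : (S.card : ℝ) ≤ 2 * ((k + 1) * (n * g ^ 2)) := by exact_mod_cast hSc
  have h3 : (P.card : ℝ) * (2 * hops M k) ≤ P.card * (n : ℝ) ^ δ := by gcongr
  rw [mul_add]
  linarith
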